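/- Let (M, H) be a right cocycle double cross product pair of a coalgebra M (with distinguished group-like e) and a bialgebra H, with coalgebra maps ▷: H⊗M→M, ψ: H⊗M→H, ·: M⊗M→M, θ: M⊗M→H satisfying conditions (3.14)–(3.23) of Proposition 3.2. Then the comultiplication Δ(x⊗h) = (x₍₁₎⊗h₍₁₎)⊗(x₍₂₎⊗h₍₂₎) is multiplicative with respect to the product (x⊗h)(x'⊗h') = x₍₁₎·(h₍₁₎▷x'₍₁₎) ⊗ θ(x₍₂₎, h₍₂₎▷x'₍₂₎) ψ(h₍₃₎, x'₍₃₎) h' if and only if ψ(h₍₂₎,x₍₂₎) ⊗ h₍₁₎▷x₍₁₎ = ψ(h₍₁₎,x₍₁₎) ⊗ h₍₂₎▷x₍₂₎ and θ(x₍₂₎,x'₍₂₎) ⊗ x₍₁₎·x'₍₁₎ = θ(x₍₁₎,x'₍₁₎) ⊗ x₍₂₎·x'₍₂₎. -/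

import Mathlib

open TensorProduct LinearMap

section

variable (k : Type*) [Field k]

/-- Sweedler pairing: `(a ⊗ b) ↦ u(a₍₁₎ ⊗ b₍₁₎) ⊗ v(a₍₂₎ ⊗ b₍₂₎)`. -/
noncomputable def sweedlerPair {A B C D : Type*}
    [AddCommGroup A] [Module k A] [AddCommGroup B] [Module k B]
    [AddCommGroup C] [Module k C] [AddCommGroup D] [Module k D]
    (dA : A →ₗ[k] A ⊗[k] A) (dB : B →ₗ[k] B ⊗[k] B)
    (u : A ⊗[k] B →ₗ[k] C) (v : A ⊗[k] B →ₗ[k] D) :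
    A ⊗[k] B →ₗ[k] C ⊗[k] D :=
  (TensorProduct.map u v) ∘ₗ
    (TensorProduct.tensorTensorTensorComm k A A B B).toLinearMap ∘ₗ
    (TensorProduct.map dA dB)

variable (M H : Type*)
  [AddCommGroup M] [Module k M] [AddCommGroup H] [Module k H]

/-- The multiplication of the (right) cocycle double cross product
`(x⊗h)(x'⊗h') = x₍₁₎·(h₍₁₎▷x'₍₁₎) ⊗ θ(x₍₂₎, h₍₂₎▷x'₍₂₎) ψ(h₍₃₎, x'₍₃₎) h'`. -/
noncomputable def cdcpMul
    (dM : M →ₗ[k] M ⊗[k] M) (dH : H →ₗ[k] H ⊗[k] H)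
    (act : H ⊗[k] M →ₗ[k] M) (psi : H ⊗[k] M →ₗ[k] H)
    (mM : M ⊗[k] M →ₗ[k] M) (th : M ⊗[k] M →ₗ[k] H)
    (mH : H ⊗[k] H →ₗ[k] H) :
    (M ⊗[k] H) ⊗[k] (M ⊗[k] H) →ₗ[k] M ⊗[k] H :=
  -- `(h ⊗ x') ↦ (h₍₁₎▷x'₍₁₎) ⊗ ((h₍₂₎▷x'₍₂₎) ⊗ ψ(h₍₃₎, x'₍₃₎))`
  letI Θ : H ⊗[k] M →ₗ[k] M ⊗[k] (M ⊗[k] H) :=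
    sweedlerPair k dH dM act (sweedlerPair k dH dM act psi)
  -- `x₂ ⊗ ((a₂ ⊗ b) ⊗ h') ↦ (θ(x₂ ⊗ a₂) ∗ b) ∗ h'`
  letI R : M ⊗[k] ((M ⊗[k] H) ⊗[k] H) →ₗ[k] H :=
    mH ∘ₗ (LinearMap.rTensor H mH) ∘ₗ
      (LinearMap.rTensor H (LinearMap.rTensor H th)) ∘ₗ
      (LinearMap.rTensor H ((TensorProduct.assoc k M M H).symm.toLinearMap)) ∘ₗ
      (TensorProduct.assoc k M (M ⊗[k] H) H).symm.toLinearMap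
  (TensorProduct.map mM R) ∘ₗ
    (TensorProduct.tensorTensorTensorComm k M M M ((M ⊗[k] H) ⊗[k] H)).toLinearMap ∘ₗ
    (LinearMap.lTensor (M ⊗[k] M)
      ((TensorProduct.assoc k M (M ⊗[k] H) H).toLinearMap)) ∘ₗ
    (LinearMap.lTensor (M ⊗[k] M) (LinearMap.rTensor H Θ)) ∘ₗ
    (LinearMap.lTensor (M ⊗[k] M) ((TensorProduct.assoc k H M H).symm.toLinearMap)) ∘ₗ
    (TensorProduct.assoc k (M ⊗[k] M) H (M ⊗[k] H)).toLinearMap ∘ₗ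
    (LinearMap.rTensor (M ⊗[k] H) (LinearMap.rTensor H dM))

/-- The data and axioms of a (right) cocycle double cross product pair `(M, H)`:
`M` a coalgebra with group-like `e`, `H` a bialgebra, the four structure maps
`▷, ψ, ·, θ` coalgebra morphisms satisfying the normalization conditions and the
conditions (3.14)–(3.21) of Proposition 3.2. -/
noncomputable def CocycleDCPPair
    (dM : M →ₗ[k] M ⊗[k] M) (eM : M →ₗ[k] k)
    (dH : H →ₗ[k] H ⊗[k] H) (eH : H →ₗ[k] k)
    (act : H ⊗[k] M →ₗ[k] M) (psi : H ⊗[k] M →ₗ[k] H)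
    (mM : M ⊗[k] M →ₗ[k] M) (th : M ⊗[k] M →ₗ[k] H)
    (mH : H ⊗[k] H →ₗ[k] H) (e : M) (oneH : H) : Prop :=
  -- `M` is a coalgebra
  ((TensorProduct.assoc k M M M).toLinearMap ∘ₗ (LinearMap.rTensor M dM) ∘ₗ dM =
    (LinearMap.lTensor M dM) ∘ₗ dM) ∧
  ((TensorProduct.lid k M).toLinearMap ∘ₗ (LinearMap.rTensor M eM) ∘ₗ dM =
    LinearMap.id) ∧
  ((TensorProduct.rid k M).toLinearMap ∘ₗ (LinearMap.lTensor M eM) ∘ₗ dM =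
    LinearMap.id) ∧
  -- `H` is a coalgebra
  ((TensorProduct.assoc k H H H).toLinearMap ∘ₗ (LinearMap.rTensor H dH) ∘ₗ dH =
    (LinearMap.lTensor H dH) ∘ₗ dH) ∧
  ((TensorProduct.lid k H).toLinearMap ∘ₗ (LinearMap.rTensor H eH) ∘ₗ dH =
    LinearMap.id) ∧
  ((TensorProduct.rid k H).toLinearMap ∘ₗ (LinearMap.lTensor H eH) ∘ₗ dH =
    LinearMap.id) ∧
  -- `H` is a bialgebra (associative unital multiplication, `Δ_H`, `ε_H` multiplicative)
  (mH ∘ₗ (LinearMap.rTensor H mH) =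
    mH ∘ₗ (LinearMap.lTensor H mH) ∘ₗ (TensorProduct.assoc k H H H).toLinearMap) ∧
  (∀ h : H, mH (oneH ⊗ₜ h) = h) ∧ (∀ h : H, mH (h ⊗ₜ oneH) = h) ∧
  (dH ∘ₗ mH = sweedlerPair k dH dH mH mH) ∧
  (∀ h h' : H, eH (mH (h ⊗ₜ h')) = eH h * eH h') ∧
  -- group-likes
  (dM e = e ⊗ₜ e) ∧ (eM e = 1) ∧ (dH oneH = oneH ⊗ₜ oneH) ∧ (eH oneH = 1) ∧
  -- `▷`, `ψ`, `·`, `θ` are coalgebra morphisms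
  (dM ∘ₗ act = sweedlerPair k dH dM act act) ∧
  (∀ (h : H) (x : M), eM (act (h ⊗ₜ x)) = eH h * eM x) ∧
  (dH ∘ₗ psi = sweedlerPair k dH dM psi psi) ∧
  (∀ (h : H) (x : M), eH (psi (h ⊗ₜ x)) = eH h * eM x) ∧
  (dM ∘ₗ mM = sweedlerPair k dM dM mM mM) ∧
  (∀ x x' : M, eM (mM (x ⊗ₜ x')) = eM x * eM x') ∧
  (dH ∘ₗ th = sweedlerPair k dM dM th th) ∧
  (∀ x x' : M, eH (th (x ⊗ₜ x')) = eM x * eM x') ∧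
  -- normalization conditions
  (∀ x : M, act (oneH ⊗ₜ x) = x) ∧
  (∀ h : H, psi (h ⊗ₜ e) = h) ∧
  (∀ h : H, act (h ⊗ₜ e) = eH h • e) ∧
  (∀ x : M, psi (oneH ⊗ₜ x) = eM x • oneH) ∧
  (th (e ⊗ₜ e) = oneH) ∧
  -- (3.14) `e·x = x = x·e`
  (∀ x : M, mM (e ⊗ₜ x) = x) ∧ (∀ x : M, mM (x ⊗ₜ e) = x) ∧
  -- (3.15) `θ(x,e) = ε(x)1 = θ(e,x)`
  (∀ x : M, th (x ⊗ₜ e) = eM x • oneH) ∧ (∀ x : M, th (e ⊗ₜ x) = eM x • oneH) ∧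
  -- (3.16) `h▷(x·x') = (h₍₁₎▷x₍₁₎)·(ψ(h₍₂₎,x₍₂₎)▷x')`
  (act ∘ₗ (LinearMap.lTensor H mM) =
    mM ∘ₗ (LinearMap.lTensor M act) ∘ₗ
      (TensorProduct.assoc k M H M).toLinearMap ∘ₗ
      (LinearMap.rTensor M (sweedlerPair k dH dM act psi)) ∘ₗ
      (TensorProduct.assoc k H M M).symm.toLinearMap) ∧
  -- (3.17) `ψ(h, x₍₁₎·x'₍₁₎)θ(x₍₂₎,x'₍₂₎)
  --          = θ(h₍₁₎▷x₍₁₎, ψ(h₍₂₎,x₍₂₎)▷x'₍₁₎)ψ(ψ(h₍₃₎,x₍₃₎),x'₍₂₎)`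
  (mH ∘ₗ (LinearMap.rTensor H psi) ∘ₗ
      (TensorProduct.assoc k H M H).symm.toLinearMap ∘ₗ
      (LinearMap.lTensor H (sweedlerPair k dM dM mM th)) =
    mH ∘ₗ (LinearMap.rTensor H th) ∘ₗ
      (TensorProduct.assoc k M M H).symm.toLinearMap ∘ₗ
      (LinearMap.lTensor M (TensorProduct.map act psi)) ∘ₗ
      (LinearMap.lTensor M
        (TensorProduct.tensorTensorTensorComm k H H M M).toLinearMap) ∘ₗ
      (TensorProduct.assoc k M (H ⊗[k] H) (M ⊗[k] M)).toLinearMap ∘ₗ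
      (LinearMap.lTensor (M ⊗[k] (H ⊗[k] H)) dM) ∘ₗ
      (LinearMap.rTensor M (sweedlerPair k dH dM act (sweedlerPair k dH dM psi psi))) ∘ₗ
      (TensorProduct.assoc k H M M).symm.toLinearMap) ∧
  -- (3.18) `ψ(hh', x) = ψ(h, h'₍₁₎▷x₍₁₎)ψ(h'₍₂₎, x₍₂₎)`
  (psi ∘ₗ (LinearMap.rTensor M mH) =
    mH ∘ₗ (LinearMap.rTensor H psi) ∘ₗ
      (TensorProduct.assoc k H M H).symm.toLinearMap ∘ₗ
      (LinearMap.lTensor H (sweedlerPair k dH dM act psi)) ∘ₗ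
      (TensorProduct.assoc k H H M).toLinearMap) ∧
  -- (3.19) `M` is a left `H`-module
  (act ∘ₗ (LinearMap.rTensor M mH) =
    act ∘ₗ (LinearMap.lTensor H act) ∘ₗ (TensorProduct.assoc k H H M).toLinearMap) ∧
  -- (3.20) `x·(x'·x'') = (x₍₁₎·x'₍₁₎)·(θ(x₍₂₎,x'₍₂₎)▷x'')`
  (mM ∘ₗ (LinearMap.lTensor M mM) =
    mM ∘ₗ (LinearMap.lTensor M act) ∘ₗ
      (TensorProduct.assoc k M H M).toLinearMap ∘ₗ
      (LinearMap.rTensor M (sweedlerPair k dM dM mM th)) ∘ₗ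
      (TensorProduct.assoc k M M M).symm.toLinearMap) ∧
  -- (3.21) `θ(x, x'₍₁₎·x''₍₁₎)θ(x'₍₂₎,x''₍₂₎)
  --          = θ(x₍₁₎·x'₍₁₎, θ(x₍₂₎,x'₍₂₎)▷x''₍₁₎)ψ(θ(x₍₃₎,x'₍₃₎),x''₍₂₎)`
  (mH ∘ₗ (LinearMap.rTensor H th) ∘ₗ
      (TensorProduct.assoc k M M H).symm.toLinearMap ∘ₗ
      (LinearMap.lTensor M (sweedlerPair k dM dM mM th)) =
    mH ∘ₗ (LinearMap.rTensor H th) ∘ₗ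
      (TensorProduct.assoc k M M H).symm.toLinearMap ∘ₗ
      (LinearMap.lTensor M (TensorProduct.map act psi)) ∘ₗ
      (LinearMap.lTensor M
        (TensorProduct.tensorTensorTensorComm k H H M M).toLinearMap) ∘ₗ
      (TensorProduct.assoc k M (H ⊗[k] H) (M ⊗[k] M)).toLinearMap ∘ₗ
      (LinearMap.lTensor (M ⊗[k] (H ⊗[k] H)) dM) ∘ₗ
      (LinearMap.rTensor M (sweedlerPair k dM dM mM (sweedlerPair k dM dM th th))) ∘ₗ
      (TensorProduct.assoc k M M M).symm.toLinearMap)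


theorem aux_left {k A B : Type*} [Field k] [AddCommGroup A] [Module k A] [AddCommGroup B] [Module k B]
    [Coalgebra k A] [Coalgebra k B] :
    TensorProduct.map
      ((TensorProduct.lid k B).toLinearMap ∘ₗ LinearMap.rTensor B (Coalgebra.counit (R := k) (A := A)))
      ((TensorProduct.rid k A).toLinearMap ∘ₗ LinearMap.lTensor A (Coalgebra.counit (R := k) (A := B)))
      ∘ₗ (TensorProduct.tensorTensorTensorComm k A A B B).toLinearMap ∘ₗ
        (TensorProduct.map Coalgebra.comul Coalgebra.comul)
      = (TensorProduct.comm k A B).toLinearMap := by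
  have h : TensorProduct.map
      ((TensorProduct.lid k B).toLinearMap ∘ₗ LinearMap.rTensor B (Coalgebra.counit (R := k) (A := A)))
      ((TensorProduct.rid k A).toLinearMap ∘ₗ LinearMap.lTensor A (Coalgebra.counit (R := k) (A := B)))
      ∘ₗ (TensorProduct.tensorTensorTensorComm k A A B B).toLinearMap
      = (TensorProduct.comm k A B).toLinearMap ∘ₗ
        TensorProduct.map
          ((TensorProduct.lid k A).toLinearMap ∘ₗ LinearMap.rTensor A (Coalgebra.counit (R := k) (A := A)))
          ((TensorProduct.rid k B).toLinearMap ∘ₗ LinearMap.lTensor B (Coalgebra.counit (R := k) (A := B))) := by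
    ext a a' b b'
    simp [TensorProduct.smul_tmul', TensorProduct.tmul_smul, smul_smul, mul_comm]
  rw [← LinearMap.comp_assoc, h]
  ext a b
  simp

theorem aux_key {k C A B : Type*} [Field k] [AddCommGroup A] [Module k A] [AddCommGroup B] [Module k B]
    [AddCommGroup C] [Module k C]
    [Coalgebra k A] [Coalgebra k B] [Coalgebra k C] (f : C →ₗc[k] A) (g : C →ₗc[k] B) :
    ((TensorProduct.tensorTensorTensorComm k A A B B).toLinearMap ∘ₗ
        (TensorProduct.map Coalgebra.comul Coalgebra.comul)) ∘ₗ
        (TensorProduct.map f.toLinearMap g.toLinearMap ∘ₗ Coalgebra.comul) =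
      TensorProduct.map (TensorProduct.map f.toLinearMap g.toLinearMap ∘ₗ Coalgebra.comul)
        (TensorProduct.map f.toLinearMap g.toLinearMap ∘ₗ Coalgebra.comul) ∘ₗ Coalgebra.comul ↔
    (TensorProduct.comm k A B).toLinearMap ∘ₗ
        (TensorProduct.map f.toLinearMap g.toLinearMap ∘ₗ Coalgebra.comul) =
      TensorProduct.map g.toLinearMap f.toLinearMap ∘ₗ Coalgebra.comul := by
  have hf := f.counit_comp
  have hg := g.counit_comp
  have hf' := f.map_comp_comul
  have hg' := g.map_comp_comul
  generalize f.toLinearMap = f at *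
  generalize g.toLinearMap = g at *
  constructor
  · intro h
    rw [← aux_left]
    have h2 := congrArg (fun t => TensorProduct.map
      ((TensorProduct.lid k B).toLinearMap ∘ₗ LinearMap.rTensor B (Coalgebra.counit (R := k) (A := A)))
      ((TensorProduct.rid k A).toLinearMap ∘ₗ LinearMap.lTensor A (Coalgebra.counit (R := k) (A := B))) ∘ₗ t) h
    simp only [← LinearMap.comp_assoc] at h2 ⊢
    rw [h2, ← TensorProduct.map_comp]
    congr 2
    · have : (LinearMap.rTensor B (Coalgebra.counit (R := k) (A := A))) ∘ₗ TensorProduct.map f g =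
        LinearMap.lTensor k g ∘ₗ LinearMap.rTensor C (Coalgebra.counit (R := k) (A := C)) := by
        ext; simp [← hf]
      ext c
      simp only [LinearMap.comp_assoc] 
      rw [← LinearMap.comp_assoc _ _ (LinearMap.rTensor _ _), this]
      simp only [LinearMap.coe_comp, Function.comp_apply, Coalgebra.rTensor_counit_comul, LinearMap.lTensor_tmul]
      simp
    · have : (LinearMap.lTensor A (Coalgebra.counit (R := k) (A := B))) ∘ₗ TensorProduct.map f g =
        LinearMap.rTensor k f ∘ₗ LinearMap.lTensor C (Coalgebra.counit (R := k) (A := C)) := by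
        ext; simp [← hg]
      ext c
      simp only [LinearMap.comp_assoc] 
      rw [← LinearMap.comp_assoc _ _ (LinearMap.lTensor _ _), this]
      simp only [LinearMap.coe_comp, Function.comp_apply, Coalgebra.lTensor_counit_comul, LinearMap.rTensor_tmul]
      simp
  · intro h
    -- coassociativity, in the form `(c₁ ⊗ c₂) ⊗ (c₃ ⊗ c₄) ↔ c₁ ⊗ ((c₂ ⊗ c₃) ⊗ c₄)`
    have co : TensorProduct.map Coalgebra.comul Coalgebra.comul ∘ₗ Coalgebra.comul (R := k) (A := C) =
        (TensorProduct.assoc k C C (C ⊗[k] C)).symm.toLinearMap ∘ₗ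
          LinearMap.lTensor C (TensorProduct.assoc k C C C).toLinearMap ∘ₗ
          LinearMap.lTensor C (LinearMap.rTensor C Coalgebra.comul) ∘ₗ
          LinearMap.lTensor C Coalgebra.comul ∘ₗ Coalgebra.comul := by
      have e1 : LinearMap.lTensor C (TensorProduct.assoc k C C C).toLinearMap ∘ₗ
          LinearMap.lTensor C (LinearMap.rTensor C Coalgebra.comul) ∘ₗ
          LinearMap.lTensor C (Coalgebra.comul (R := k) (A := C)) = 
          LinearMap.lTensor C (LinearMap.lTensor C Coalgebra.comul) ∘ₗ
          LinearMap.lTensor C Coalgebra.comul := by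
        simp only [← LinearMap.lTensor_comp, Coalgebra.coassoc]
      have e2 : TensorProduct.map Coalgebra.comul (Coalgebra.comul (R := k) (A := C)) = 
          LinearMap.lTensor (C ⊗[k] C) Coalgebra.comul ∘ₗ LinearMap.rTensor C Coalgebra.comul := by
        ext; simp
      have e3 : LinearMap.lTensor (C ⊗[k] C) (Coalgebra.comul (R := k) (A := C)) =
         (TensorProduct.assoc k C C (C ⊗[k] C)).symm.toLinearMap ∘ₗ 
           LinearMap.lTensor C (LinearMap.lTensor C Coalgebra.comul) ∘ₗ (TensorProduct.assoc k C C C).toLinearMap := by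
        ext a b c
        simp only [AlgebraTensorModule.curry_apply, curry_apply, restrictScalars_self, coe_comp, LinearEquiv.coe_coe,
          Function.comp_apply, lTensor_tmul, assoc_tmul]
        generalize (Coalgebra.comul c : C ⊗[k] C) = t
        induction t with
        | zero => simp
        | add => simp_all [TensorProduct.tmul_add]
        | tmul => simp
      have e1' := congrArg (fun t => (TensorProduct.assoc k C C (C ⊗[k] C)).symm.toLinearMap ∘ₗ t ∘ₗ Coalgebra.comul (R := k) (A := C)) e1
      simp only [LinearMap.comp_assoc] at e1'
      rw [e1', ← Coalgebra.coassoc, e2, e3]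
      simp only [LinearMap.comp_assoc]
    -- the two sides, written in terms of the middle factor
    let T : A ⊗[k] ((B ⊗[k] A) ⊗[k] B) →ₗ[k] (A ⊗[k] B) ⊗[k] (A ⊗[k] B) :=
      (TensorProduct.assoc k A B (A ⊗[k] B)).symm.toLinearMap ∘ₗ
        LinearMap.lTensor A (TensorProduct.assoc k B A B).toLinearMap
    have r1 : (TensorProduct.tensorTensorTensorComm k A A B B).toLinearMap ∘ₗ
        TensorProduct.map (TensorProduct.map f f) (TensorProduct.map g g) ∘ₗ
        (TensorProduct.assoc k C C (C ⊗[k] C)).symm.toLinearMap ∘ₗ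
          LinearMap.lTensor C (TensorProduct.assoc k C C C).toLinearMap = 
        T ∘ₗ TensorProduct.map f (TensorProduct.map ((TensorProduct.comm k A B).toLinearMap ∘ₗ TensorProduct.map f g) g) := by
      ext; simp [T]
    have r2 : TensorProduct.map (TensorProduct.map f g) (TensorProduct.map f g) ∘ₗ
        (TensorProduct.assoc k C C (C ⊗[k] C)).symm.toLinearMap ∘ₗ
          LinearMap.lTensor C (TensorProduct.assoc k C C C).toLinearMap = 
        T ∘ₗ TensorProduct.map f (TensorProduct.map (TensorProduct.map g f) g) := by
      ext; simp [T]
    have m : ∀ (q : C ⊗[k] C →ₗ[k] B ⊗[k] A) (X : C →ₗ[k] C ⊗[k] (C ⊗[k] C)),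
        TensorProduct.map f (TensorProduct.map q g) ∘ₗ
        LinearMap.lTensor C (LinearMap.rTensor C Coalgebra.comul) ∘ₗ X =
        TensorProduct.map f (TensorProduct.map (q ∘ₗ Coalgebra.comul) g) ∘ₗ X := by
      intro q X
      rw [← LinearMap.comp_assoc]
      congr 1
      ext; simp
    have L : ((TensorProduct.tensorTensorTensorComm k A A B B).toLinearMap ∘ₗ
        (TensorProduct.map Coalgebra.comul Coalgebra.comul)) ∘ₗ
        (TensorProduct.map f g ∘ₗ Coalgebra.comul) = 
        ((TensorProduct.tensorTensorTensorComm k A A B B).toLinearMap ∘ₗ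
        TensorProduct.map (TensorProduct.map f f) (TensorProduct.map g g)) ∘ₗ
        TensorProduct.map Coalgebra.comul Coalgebra.comul ∘ₗ Coalgebra.comul := by
      simp only [LinearMap.comp_assoc]
      rw [← LinearMap.comp_assoc _ _ (TensorProduct.map (TensorProduct.map f f) (TensorProduct.map g g)),
        ← TensorProduct.map_comp, hf', hg', TensorProduct.map_comp]
      simp only [LinearMap.comp_assoc]
    have r1' := congrArg (fun t => t ∘ₗ LinearMap.lTensor C (LinearMap.rTensor C Coalgebra.comul) ∘ₗ
          LinearMap.lTensor C Coalgebra.comul ∘ₗ Coalgebra.comul (R := k) (A := C)) r1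
    have r2' := congrArg (fun t => t ∘ₗ LinearMap.lTensor C (LinearMap.rTensor C Coalgebra.comul) ∘ₗ
          LinearMap.lTensor C Coalgebra.comul ∘ₗ Coalgebra.comul (R := k) (A := C)) r2
    simp only [LinearMap.comp_assoc] at r1' r2'
    rw [L, TensorProduct.map_comp]
    simp only [LinearMap.comp_assoc]
    rw [co, r1', r2', m, m, ← h]
    simp only [LinearMap.comp_assoc]

/-- Under the compatibility condition, `c ↦ f(c₁) ⊗ g(c₂)` is a morphism of coalgebras. -/
theorem aux_hom {k C A B : Type*} [Field k] [AddCommGroup A] [Module k A] [AddCommGroup B] [Module k B]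
    [AddCommGroup C] [Module k C]
    [Coalgebra k A] [Coalgebra k B] [Coalgebra k C] (f : C →ₗc[k] A) (g : C →ₗc[k] B)
    (h : (TensorProduct.comm k A B).toLinearMap ∘ₗ
        (TensorProduct.map f.toLinearMap g.toLinearMap ∘ₗ Coalgebra.comul) =
      TensorProduct.map g.toLinearMap f.toLinearMap ∘ₗ Coalgebra.comul) :
    ∃ F : C →ₗc[k] A ⊗[k] B, F.toLinearMap =
      TensorProduct.map f.toLinearMap g.toLinearMap ∘ₗ Coalgebra.comul := by
  refine ⟨⟨TensorProduct.map f.toLinearMap g.toLinearMap ∘ₗ Coalgebra.comul, ?_, ?_⟩, rfl⟩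
  · have h1 : Coalgebra.counit (R := k) (A := A ⊗[k] B) ∘ₗ
        TensorProduct.map f.toLinearMap g.toLinearMap =
        (TensorProduct.rid k k).toLinearMap ∘ₗ LinearMap.rTensor k Coalgebra.counit ∘ₗ
          LinearMap.lTensor C Coalgebra.counit := by
      ext a b
      have hf := LinearMap.congr_fun f.counit_comp a
      have hg := LinearMap.congr_fun g.counit_comp b
      simp only [LinearMap.coe_comp, Function.comp_apply] at hf hg
      simp only [AlgebraTensorModule.curry_apply, curry_apply, restrictScalars_self, coe_comp,
        LinearEquiv.coe_coe, Function.comp_apply, map_tmul, TensorProduct.counit_tmul, hf, hg,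
        lTensor_tmul, rTensor_tmul, TensorProduct.rid_tmul]
    rw [← LinearMap.comp_assoc, h1]
    ext c
    simp only [LinearMap.coe_comp, Function.comp_apply, Coalgebra.lTensor_counit_comul,
      LinearMap.rTensor_tmul]
    simp
  · exact ((aux_key f g).2 h).symm

theorem aux_theta {k C A B : Type*} [Field k] [AddCommGroup A] [Module k A] [AddCommGroup B] [Module k B]
    [AddCommGroup C] [Module k C]
    [Coalgebra k A] [Coalgebra k B] [Coalgebra k C] (f : C →ₗc[k] A) (g : C →ₗc[k] B) :
    TensorProduct.map f.toLinearMap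
      (TensorProduct.map f.toLinearMap g.toLinearMap ∘ₗ Coalgebra.comul) ∘ₗ Coalgebra.comul =
    (TensorProduct.assoc k A A B).toLinearMap ∘ₗ LinearMap.rTensor B Coalgebra.comul ∘ₗ
      TensorProduct.map f.toLinearMap g.toLinearMap ∘ₗ Coalgebra.comul := by
  have hf := f.map_comp_comul
  generalize f.toLinearMap = f at *
  generalize g.toLinearMap = g at *
  have h1 : LinearMap.rTensor B Coalgebra.comul ∘ₗ TensorProduct.map f g =
      TensorProduct.map (TensorProduct.map f f) g ∘ₗ LinearMap.rTensor C Coalgebra.comul := by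
    rw [LinearMap.rTensor_comp_map, LinearMap.map_comp_rTensor, hf]
  have h2 : (TensorProduct.assoc k A A B).toLinearMap ∘ₗ
      TensorProduct.map (TensorProduct.map f f) g =
      TensorProduct.map f (TensorProduct.map f g) ∘ₗ (TensorProduct.assoc k C C C).toLinearMap := by
    ext; simp
  have h3 : TensorProduct.map f (TensorProduct.map f g ∘ₗ Coalgebra.comul) =
      TensorProduct.map f (TensorProduct.map f g) ∘ₗ LinearMap.lTensor C Coalgebra.comul := by
    rw [LinearMap.map_comp_lTensor]
  rw [h3, LinearMap.comp_assoc, ← Coalgebra.coassoc, ← LinearMap.comp_assoc, ← h2]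
  have h1' := congrArg (fun t => t ∘ₗ Coalgebra.comul (R := k) (A := C)) h1
  simp only [LinearMap.comp_assoc] at h1' ⊢
  rw [h1']

/-- The factorised form of the cocycle double cross product multiplication. -/
noncomputable def auxMul (k M H : Type*) [Field k] [AddCommGroup M] [Module k M]
    [AddCommGroup H] [Module k H]
    (Phi : H ⊗[k] M →ₗ[k] M ⊗[k] H) (Xi : M ⊗[k] M →ₗ[k] M ⊗[k] H) (mH : H ⊗[k] H →ₗ[k] H) :
    (M ⊗[k] H) ⊗[k] (M ⊗[k] H) →ₗ[k] M ⊗[k] H :=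
  LinearMap.lTensor M mH ∘ₗ (TensorProduct.assoc k M H H).toLinearMap ∘ₗ
    TensorProduct.map Xi mH ∘ₗ (TensorProduct.assoc k M M (H ⊗[k] H)).symm.toLinearMap ∘ₗ
    LinearMap.lTensor M (TensorProduct.assoc k M H H).toLinearMap ∘ₗ
    LinearMap.lTensor M (LinearMap.rTensor H Phi) ∘ₗ
    LinearMap.lTensor M (TensorProduct.assoc k H M H).symm.toLinearMap ∘ₗ
    (TensorProduct.assoc k M H (M ⊗[k] H)).toLinearMap

theorem cdcpMul_eq_auxMul {k M H : Type*} [Field k] [AddCommGroup M] [Module k M]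
    [AddCommGroup H] [Module k H]
    (dM : M →ₗ[k] M ⊗[k] M) (dH : H →ₗ[k] H ⊗[k] H)
    (act : H ⊗[k] M →ₗ[k] M) (psi : H ⊗[k] M →ₗ[k] H)
    (mM : M ⊗[k] M →ₗ[k] M) (th : M ⊗[k] M →ₗ[k] H)
    (mH : H ⊗[k] H →ₗ[k] H)
    (hassoc : mH ∘ₗ (LinearMap.rTensor H mH) =
      mH ∘ₗ (LinearMap.lTensor H mH) ∘ₗ (TensorProduct.assoc k H H H).toLinearMap)
    (hT : sweedlerPair k dH dM act (sweedlerPair k dH dM act psi) =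
      (TensorProduct.assoc k M M H).toLinearMap ∘ₗ LinearMap.rTensor H dM ∘ₗ
        sweedlerPair k dH dM act psi) :
    cdcpMul k M H dM dH act psi mM th mH =
      auxMul k M H (sweedlerPair k dH dM act psi) (sweedlerPair k dM dM mM th) mH := by
  have ha : ∀ a b c, mH (mH (a ⊗ₜ b) ⊗ₜ c) = mH (a ⊗ₜ mH (b ⊗ₜ c)) := fun a b c => by
    have := LinearMap.congr_fun hassoc ((a ⊗ₜ b) ⊗ₜ c)
    simpa using this
  unfold cdcpMul auxMul
  rw [hT]
  generalize sweedlerPair k dH dM act psi = Phi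
  unfold sweedlerPair
  ext x h x' h'
  simp only [AlgebraTensorModule.curry_apply, curry_apply, restrictScalars_self, coe_comp,
    LinearEquiv.coe_coe, Function.comp_apply, lTensor_tmul, rTensor_tmul, assoc_tmul,
    assoc_symm_tmul]
  generalize Phi (h ⊗ₜ x') = t
  induction t with
  | zero => simp
  | add => simp_all [TensorProduct.tmul_add, TensorProduct.add_tmul]
  | tmul a b =>
    simp only [rTensor_tmul, assoc_tmul, assoc_symm_tmul, map_tmul, coe_comp,
      LinearEquiv.coe_coe, Function.comp_apply]
    generalize dM x = p
    generalize dM a = q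
    induction p with
    | zero => simp
    | add => simp_all [TensorProduct.add_tmul]
    | tmul p1 p2 =>
      induction q with
      | zero => simp
      | add => simp_all [TensorProduct.tmul_add, TensorProduct.add_tmul]
      | tmul q1 q2 => simp [ha]

theorem main_aux {k M H : Type*} [Field k] [AddCommGroup M] [Module k M]
    [AddCommGroup H] [Module k H] [Coalgebra k M] [Coalgebra k H]
    (act : H ⊗[k] M →ₗc[k] M) (psi : H ⊗[k] M →ₗc[k] H)
    (mM : M ⊗[k] M →ₗc[k] M) (th : M ⊗[k] M →ₗc[k] H)
    (mH : H ⊗[k] H →ₗc[k] H) (e : M) (oneH : H)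
    (hassoc : mH.toLinearMap ∘ₗ (LinearMap.rTensor H mH.toLinearMap) =
      mH.toLinearMap ∘ₗ (LinearMap.lTensor H mH.toLinearMap) ∘ₗ
        (TensorProduct.assoc k H H H).toLinearMap)
    (one_mul' : ∀ h : H, mH.toLinearMap (oneH ⊗ₜ h) = h)
    (mul_one' : ∀ h : H, mH.toLinearMap (h ⊗ₜ oneH) = h)
    (de : Coalgebra.comul (R := k) e = e ⊗ₜ e)
    (d1 : Coalgebra.comul (R := k) oneH = oneH ⊗ₜ oneH)
    (act1 : ∀ x : M, act.toLinearMap (oneH ⊗ₜ x) = x)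
    (psi1 : ∀ x : M, psi.toLinearMap (oneH ⊗ₜ x) = Coalgebra.counit (R := k) x • oneH)
    (emul : ∀ x : M, mM.toLinearMap (e ⊗ₜ x) = x)
    (eth : ∀ x : M, th.toLinearMap (e ⊗ₜ x) = Coalgebra.counit (R := k) x • oneH) :
    (((TensorProduct.tensorTensorTensorComm k M M H H).toLinearMap ∘ₗ
        (TensorProduct.map Coalgebra.comul Coalgebra.comul)) ∘ₗ
      cdcpMul k M H Coalgebra.comul Coalgebra.comul act.toLinearMap psi.toLinearMap
        mM.toLinearMap th.toLinearMap mH.toLinearMap =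
      (TensorProduct.map
        (cdcpMul k M H Coalgebra.comul Coalgebra.comul act.toLinearMap psi.toLinearMap
          mM.toLinearMap th.toLinearMap mH.toLinearMap)
        (cdcpMul k M H Coalgebra.comul Coalgebra.comul act.toLinearMap psi.toLinearMap
          mM.toLinearMap th.toLinearMap mH.toLinearMap)) ∘ₗ
        Coalgebra.comul (R := k) (A := (M ⊗[k] H) ⊗[k] (M ⊗[k] H))) ↔
    (((TensorProduct.comm k M H).toLinearMap ∘ₗ
        (TensorProduct.map act.toLinearMap psi.toLinearMap ∘ₗ Coalgebra.comul) =
      TensorProduct.map psi.toLinearMap act.toLinearMap ∘ₗ Coalgebra.comul) ∧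
     ((TensorProduct.comm k M H).toLinearMap ∘ₗ
        (TensorProduct.map mM.toLinearMap th.toLinearMap ∘ₗ Coalgebra.comul) =
      TensorProduct.map th.toLinearMap mM.toLinearMap ∘ₗ Coalgebra.comul)) := by
  have hmul : cdcpMul k M H Coalgebra.comul Coalgebra.comul act.toLinearMap psi.toLinearMap
        mM.toLinearMap th.toLinearMap mH.toLinearMap =
      auxMul k M H (TensorProduct.map act.toLinearMap psi.toLinearMap ∘ₗ Coalgebra.comul)
        (TensorProduct.map mM.toLinearMap th.toLinearMap ∘ₗ Coalgebra.comul) mH.toLinearMap :=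
    cdcpMul_eq_auxMul _ _ _ _ _ _ _ hassoc (aux_theta act psi)
  rw [hmul]
  constructor
  · intro h
    have hXi : ∀ a : M, (TensorProduct.map mM.toLinearMap th.toLinearMap ∘ₗ Coalgebra.comul)
        (e ⊗ₜ[k] a) = a ⊗ₜ oneH := by
      intro a
      have h1 : ∀ q : M ⊗[k] M, TensorProduct.map mM.toLinearMap th.toLinearMap
          (TensorProduct.tensorTensorTensorComm k M M M M ((e ⊗ₜ e) ⊗ₜ q)) =
          LinearMap.lTensor M (LinearMap.toSpanSingleton k H oneH)
            (LinearMap.lTensor M Coalgebra.counit q) := by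
        intro q
        induction q with
        | zero => simp
        | add => simp_all [TensorProduct.tmul_add]
        | tmul => simp only [tensorTensorTensorComm_tmul, map_tmul, emul, eth, lTensor_tmul,
            LinearMap.toSpanSingleton_apply]
      have h2 := h1 (Coalgebra.comul a)
      rw [Coalgebra.lTensor_counit_comul, ← de] at h2
      refine h2.trans ?_
      simp
    have hPhi : ∀ x : M, (TensorProduct.map act.toLinearMap psi.toLinearMap ∘ₗ Coalgebra.comul)
        (oneH ⊗ₜ[k] x) = x ⊗ₜ oneH := by
      intro a
      have h1 : ∀ q : M ⊗[k] M, TensorProduct.map act.toLinearMap psi.toLinearMap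
          (TensorProduct.tensorTensorTensorComm k H H M M ((oneH ⊗ₜ oneH) ⊗ₜ q)) =
          LinearMap.lTensor M (LinearMap.toSpanSingleton k H oneH)
            (LinearMap.lTensor M Coalgebra.counit q) := by
        intro q
        induction q with
        | zero => simp
        | add => simp_all [TensorProduct.tmul_add]
        | tmul => simp only [tensorTensorTensorComm_tmul, map_tmul, act1, psi1, lTensor_tmul,
            LinearMap.toSpanSingleton_apply]
      have h2 := h1 (Coalgebra.comul a)
      rw [Coalgebra.lTensor_counit_comul, ← d1] at h2
      refine h2.trans ?_
      simp
    rw [← aux_key, ← aux_key]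
    generalize hP : TensorProduct.map act.toLinearMap psi.toLinearMap ∘ₗ Coalgebra.comul = Phi at *
    generalize hX : TensorProduct.map mM.toLinearMap th.toLinearMap ∘ₗ Coalgebra.comul = Xi at *
    constructor
    · -- restrict along `h ⊗ x ↦ (e ⊗ h) ⊗ (x ⊗ 1)`
      let i : H ⊗[k] M →ₗ[k] (M ⊗[k] H) ⊗[k] (M ⊗[k] H) :=
        TensorProduct.map (TensorProduct.mk k M H e) ((TensorProduct.mk k M H).flip oneH)
      have hi : auxMul k M H Phi Xi mH.toLinearMap ∘ₗ i = Phi := by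
        ext a b
        simp only [auxMul, i, AlgebraTensorModule.curry_apply, curry_apply, restrictScalars_self,
          coe_comp, LinearEquiv.coe_coe, Function.comp_apply, map_tmul, mk_apply, flip_apply,
          lTensor_tmul, rTensor_tmul, assoc_tmul, assoc_symm_tmul]
        generalize Phi (a ⊗ₜ b) = t
        induction t with
        | zero => simp
        | add => simp_all [TensorProduct.tmul_add, TensorProduct.add_tmul]
        | tmul => simp only [assoc_tmul, assoc_symm_tmul, map_tmul, hXi, lTensor_tmul,
            one_mul', mul_one']
      have hci : Coalgebra.comul ∘ₗ i = TensorProduct.map i i ∘ₗ Coalgebra.comul := by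
        ext a b
        simp only [i, AlgebraTensorModule.curry_apply, curry_apply, restrictScalars_self,
          coe_comp, LinearEquiv.coe_coe, Function.comp_apply, map_tmul, mk_apply, flip_apply,
          TensorProduct.comul_tmul, de, d1]
        generalize (Coalgebra.comul a : H ⊗[k] H) = p
        generalize (Coalgebra.comul b : M ⊗[k] M) = q
        induction p with
        | zero => simp
        | add => simp_all [TensorProduct.add_tmul, TensorProduct.tmul_add]
        | tmul =>
          induction q with
          | zero => simp
          | add => simp_all [TensorProduct.tmul_add, TensorProduct.add_tmul]
          | tmul => simp
      have h2 := congrArg (fun t => t ∘ₗ i) h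
      simp only [LinearMap.comp_assoc, hi, hci] at h2
      simp only [LinearMap.comp_assoc]
      rw [h2, ← LinearMap.comp_assoc, ← TensorProduct.map_comp, hi]
    · -- restrict along `x ⊗ x' ↦ (x ⊗ 1) ⊗ (x' ⊗ 1)`
      let i : M ⊗[k] M →ₗ[k] (M ⊗[k] H) ⊗[k] (M ⊗[k] H) :=
        TensorProduct.map ((TensorProduct.mk k M H).flip oneH) ((TensorProduct.mk k M H).flip oneH)
      have hi : auxMul k M H Phi Xi mH.toLinearMap ∘ₗ i = Xi := by
        ext a b
        simp only [auxMul, i, AlgebraTensorModule.curry_apply, curry_apply, restrictScalars_self,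
          coe_comp, LinearEquiv.coe_coe, Function.comp_apply, map_tmul, mk_apply, flip_apply,
          lTensor_tmul, rTensor_tmul, assoc_tmul, assoc_symm_tmul, hPhi]
        generalize Xi (a ⊗ₜ b) = t
        induction t with
        | zero => simp
        | add => simp_all [TensorProduct.tmul_add, TensorProduct.add_tmul]
        | tmul => simp only [assoc_tmul, lTensor_tmul, one_mul', mul_one']
      have hci : Coalgebra.comul ∘ₗ i = TensorProduct.map i i ∘ₗ Coalgebra.comul := by
        ext a b
        simp only [i, AlgebraTensorModule.curry_apply, curry_apply, restrictScalars_self,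
          coe_comp, LinearEquiv.coe_coe, Function.comp_apply, map_tmul, mk_apply, flip_apply,
          TensorProduct.comul_tmul, d1]
        generalize (Coalgebra.comul a : M ⊗[k] M) = p
        generalize (Coalgebra.comul b : M ⊗[k] M) = q
        induction p with
        | zero => simp
        | add => simp_all [TensorProduct.add_tmul, TensorProduct.tmul_add]
        | tmul =>
          induction q with
          | zero => simp
          | add => simp_all [TensorProduct.tmul_add, TensorProduct.add_tmul]
          | tmul => simp
      have h2 := congrArg (fun t => t ∘ₗ i) h
      simp only [LinearMap.comp_assoc, hi, hci] at h2
      simp only [LinearMap.comp_assoc]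
      rw [h2, ← LinearMap.comp_assoc, ← TensorProduct.map_comp, hi]
  · rintro ⟨h1, h2⟩
    obtain ⟨Phi, hP⟩ := aux_hom act psi h1
    obtain ⟨Xi, hX⟩ := aux_hom mM th h2
    rw [← hP, ← hX]
    let idM := CoalgHom.id k M
    let idH := CoalgHom.id k H
    let F : (M ⊗[k] H) ⊗[k] (M ⊗[k] H) →ₗc[k] M ⊗[k] H :=
      (Coalgebra.TensorProduct.map idM mH).comp <|
      (Coalgebra.TensorProduct.assoc k k M H H).toCoalgHom.comp <|
      (Coalgebra.TensorProduct.map Xi mH).comp <|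
      (Coalgebra.TensorProduct.assoc k k M M (H ⊗[k] H)).symm.toCoalgHom.comp <|
      (Coalgebra.TensorProduct.map idM (Coalgebra.TensorProduct.assoc k k M H H).toCoalgHom).comp <|
      (Coalgebra.TensorProduct.map idM (Coalgebra.TensorProduct.map Phi idH)).comp <|
      (Coalgebra.TensorProduct.map idM
        (Coalgebra.TensorProduct.assoc k k H M H).symm.toCoalgHom).comp <|
      (Coalgebra.TensorProduct.assoc k k M H (M ⊗[k] H)).toCoalgHom
    have hF : F.toLinearMap = auxMul k M H Phi.toLinearMap Xi.toLinearMap mH.toLinearMap := rfl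
    rw [← hF]
    exact F.map_comp_comul.symm

/-- For a (right) cocycle double cross product pair `(M, H)`, the tensor
product comultiplication `Δ(x⊗h) = (x₍₁₎⊗h₍₁₎)⊗(x₍₂₎⊗h₍₂₎)` is multiplicative with
respect to the cocycle double cross product multiplication if and only if
`ψ(h₍₂₎,x₍₂₎) ⊗ h₍₁₎▷x₍₁₎ = ψ(h₍₁₎,x₍₁₎) ⊗ h₍₂₎▷x₍₂₎` and
`θ(x₍₂₎,x'₍₂₎) ⊗ x₍₁₎·x'₍₁₎ = θ(x₍₁₎,x'₍₁₎) ⊗ x₍₂₎·x'₍₂₎`. -/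
theorem cocycle_double_cross_product_comul_multiplicative_iff
    (dM : M →ₗ[k] M ⊗[k] M) (eM : M →ₗ[k] k)
    (dH : H →ₗ[k] H ⊗[k] H) (eH : H →ₗ[k] k)
    (act : H ⊗[k] M →ₗ[k] M) (psi : H ⊗[k] M →ₗ[k] H)
    (mM : M ⊗[k] M →ₗ[k] M) (th : M ⊗[k] M →ₗ[k] H)
    (mH : H ⊗[k] H →ₗ[k] H) (e : M) (oneH : H)
    (hpair : CocycleDCPPair k M H dM eM dH eH act psi mM th mH e oneH) :
    letI ΔG : M ⊗[k] H →ₗ[k] (M ⊗[k] H) ⊗[k] (M ⊗[k] H) :=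
      (TensorProduct.tensorTensorTensorComm k M M H H).toLinearMap ∘ₗ
        (TensorProduct.map dM dH)
    letI mulG := cdcpMul k M H dM dH act psi mM th mH
    -- `Δ` is multiplicative
    (ΔG ∘ₗ mulG =
      (TensorProduct.map mulG mulG) ∘ₗ
        (TensorProduct.tensorTensorTensorComm k
          (M ⊗[k] H) (M ⊗[k] H) (M ⊗[k] H) (M ⊗[k] H)).toLinearMap ∘ₗ
        (TensorProduct.map ΔG ΔG)) ↔
    -- (3.22) `ψ(h₍₂₎,x₍₂₎) ⊗ h₍₁₎▷x₍₁₎ = ψ(h₍₁₎,x₍₁₎) ⊗ h₍₂₎▷x₍₂₎`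
    (((TensorProduct.comm k (M) (H)).toLinearMap ∘ₗ sweedlerPair k dH dM act psi =
        (TensorProduct.map psi act) ∘ₗ
          (TensorProduct.tensorTensorTensorComm k H H M M).toLinearMap ∘ₗ
          (TensorProduct.map dH dM)) ∧
     -- (3.23) `θ(x₍₂₎,x'₍₂₎) ⊗ x₍₁₎·x'₍₁₎ = θ(x₍₁₎,x'₍₁₎) ⊗ x₍₂₎·x'₍₂₎`
     ((TensorProduct.comm k (M) (H)).toLinearMap ∘ₗ sweedlerPair k dM dM mM th =
        (TensorProduct.map th mM) ∘ₗ
          (TensorProduct.tensorTensorTensorComm k M M M M).toLinearMap ∘ₗ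
          (TensorProduct.map dM dM))) := by
  obtain ⟨cM, lM, rM, cH, lH, rH, hassoc, one_mul', mul_one', dmH, emH, de, ee, d1, e1,
    dact, eact, dpsi, epsi, dmM, emM, dth, eth', act1, psie, acte, psi1, thee, emul, mule, the,
    eth, -⟩ := hpair
  letI iM : Coalgebra k M :=
    { comul := dM
      counit := eM
      coassoc := cM
      rTensor_counit_comp_comul := by
        ext x
        apply (TensorProduct.lid k M).injective
        simpa using LinearMap.congr_fun lM x
      lTensor_counit_comp_comul := by
        ext x
        apply (TensorProduct.rid k M).injective
        simpa using LinearMap.congr_fun rM x }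
  letI iH : Coalgebra k H :=
    { comul := dH
      counit := eH
      coassoc := cH
      rTensor_counit_comp_comul := by
        ext x
        apply (TensorProduct.lid k H).injective
        simpa using LinearMap.congr_fun lH x
      lTensor_counit_comp_comul := by
        ext x
        apply (TensorProduct.rid k H).injective
        simpa using LinearMap.congr_fun rH x }
  let act' : H ⊗[k] M →ₗc[k] M :=
    ⟨act, TensorProduct.ext' fun h x => (eact h x).trans (mul_comm _ _), dact.symm⟩
  let psi' : H ⊗[k] M →ₗc[k] H :=
    ⟨psi, TensorProduct.ext' fun h x => (epsi h x).trans (mul_comm _ _), dpsi.symm⟩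
  let mM' : M ⊗[k] M →ₗc[k] M :=
    ⟨mM, TensorProduct.ext' fun h x => (emM h x).trans (mul_comm _ _), dmM.symm⟩
  let th' : M ⊗[k] M →ₗc[k] H :=
    ⟨th, TensorProduct.ext' fun h x => (eth' h x).trans (mul_comm _ _), dth.symm⟩
  let mH' : H ⊗[k] H →ₗc[k] H :=
    ⟨mH, TensorProduct.ext' fun h x => (emH h x).trans (mul_comm _ _), dmH.symm⟩
  exact main_aux act' psi' mM' th' mH' e oneH hassoc one_mul' mul_one' de d1 act1 psi1 emul eth

end
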